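/- Let r₁, r₂, …, r_ℓ be non-negative integers and let H be a K(r₁,r₂,…,r_ℓ)-decomposable graph. Then for every η > 0 there exists ρ > 0 and n₀ such that for every d ∈ (0,1] and every (ρ,d)-dense graph G with at least n₀ vertices, t_H(G) ≥ d^{|E(H)|} − η. -/

import Mathlib

open MeasureTheory

/-- The homomorphism density `t_H(G)`. -/
noncomputable def homDensity {α β : Type*} [Fintype α] [Fintype β]
    (H : SimpleGraph α) (G : SimpleGraph β) : ℝ :=
  (Nat.card (H →g G) : ℝ) / (Fintype.card β : ℝ) ^ (Fintype.card α)

/-- The number of edges of a graph. -/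
noncomputable def edgeCount {α : Type*} (H : SimpleGraph α) : ℕ :=
  Nat.card H.edgeSet

/-- `G` is `(ρ,d)`-dense: every vertex subset `X` with `|X| ≥ ρ|V(G)|`
spans at least `(d/2)|X|²` edges. -/
def LocallyDense {β : Type*} [Fintype β] (G : SimpleGraph β) (ρ d : ℝ) : Prop :=
  ∀ X : Finset β, ρ * (Fintype.card β : ℝ) ≤ (X.card : ℝ) →
    d / 2 * (X.card : ℝ) ^ 2 ≤
      (Nat.card {e : Sym2 β // e ∈ G.edgeSet ∧ ∀ v ∈ e, v ∈ X} : ℝ)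

/-- `(bag, T)` is a tree decomposition of `H`. -/
def IsTreeDecomp {α ι : Type*} [DecidableEq α] (H : SimpleGraph α) (bag : ι → Finset α)
    (T : SimpleGraph ι) : Prop :=
  T.IsTree ∧
  (∀ v : α, ∃ X, v ∈ bag X) ∧
  (∀ u v : α, H.Adj u v → ∃ X, u ∈ bag X ∧ v ∈ bag X) ∧
  (∀ X Y Z : ι, ∀ p : T.Walk X Y, p.IsPath → Z ∈ p.support →
    bag X ∩ bag Y ⊆ bag Z)

/-- `(bag, T)` is a `J`-decomposition of `H`: a tree decomposition in which every
bag induces a copy of `J`, and for adjacent bags there is an isomorphism between the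
induced copies of `J` fixing the intersection pointwise. -/
def IsJDecomp {α ι γ : Type*} [DecidableEq α] (H : SimpleGraph α) (J : SimpleGraph γ)
    (bag : ι → Finset α) (T : SimpleGraph ι) : Prop :=
  IsTreeDecomp H bag T ∧
  (∀ X : ι, Nonempty (H.induce ↑(bag X) ≃g J)) ∧
  (∀ X Y : ι, T.Adj X Y → ∃ e : H.induce ↑(bag X) ≃g H.induce ↑(bag Y),
      ∀ (v : α) (h1 : v ∈ bag X) (h2 : v ∈ bag Y),
        ((e ⟨v, h1⟩ : ↑(bag Y)) : α) = v)

/-- `H` is `J`-decomposable. -/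
def JDecomposable {α γ : Type*} [DecidableEq α] (H : SimpleGraph α) (J : SimpleGraph γ) : Prop :=
  ∃ (ι : Type) (_ : Fintype ι) (bag : ι → Finset α) (T : SimpleGraph ι),
    IsJDecomp H J bag T

/-!
The proof is by entropy. A uniformly random homomorphism from a bag to `G` has entropy the logarithm
of the density of that bag. For neighbouring bags `X` and `Y`, the isomorphism fixing `X ∩ Y`
makes the two marginals on `X ∩ Y` agree, so along the decomposition tree the uniform homomorphisms
can be glued, conditionally independently over the intersections, into a random homomorphism from
all of `H`. Each gluing with a bag `Y` over `S = X ∩ Y` adds at least `log (t(Y) / t(S))` to the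
entropy, and the final entropy is at most `log (t_H(G))`.

It remains to bound `t(Y) / t(S)` below for complete multipartite `Y`, one vertex at a time. The
crucial estimate is that the common neighbourhood of a random copy of a complete multipartite graph
on `k` vertices has average density at least `d ^ k`, up to an error controlled by `ρ`. If the graph
is the join of `B` and an independent set `P`, this follows by induction from power-mean
inequalities applied inside the common neighbourhood of the copy of `B`, where the edge density is
at least `d` unless that neighbourhood is smaller than `ρ`.
-/

section

open Finset
open scoped BigOperators

section CondExpect

variable {α β : Type*} [Fintype α] [DecidableEq α] [Fintype β]

/-- The conditional expectation of `f`, for a uniformly random assignment `α → β`, given the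
coordinates in `S`; the remaining coordinates are resampled from an independent copy `ψ`. -/
noncomputable def condExpect (S : Finset α) (f : (α → β) → ℝ) (φ : α → β) : ℝ :=
  𝔼 ψ : α → β, f (S.piecewise φ ψ)

theorem condExpect_nonneg {S : Finset α} {f : (α → β) → ℝ} (hf : ∀ φ, 0 ≤ f φ) (φ : α → β) :
    0 ≤ condExpect S f φ :=
  expect_nonneg fun _ _ ↦ hf _

theorem eq_zero_of_condExpect_eq_zero {S : Finset α} {f : (α → β) → ℝ} (hf : ∀ φ, 0 ≤ f φ)
    {φ : α → β} (h : condExpect S f φ = 0) : f φ = 0 := by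
  rw [condExpect, expect_eq_zero_iff_of_nonneg fun _ _ ↦ hf _] at h
  simpa only [piecewise_same] using h φ (mem_univ φ)

theorem dependsOn_condExpect (S : Finset α) (f : (α → β) → ℝ) : DependsOn (condExpect S f) S :=
  fun _ _ h ↦ expect_congr rfl fun _ _ ↦
    congrArg f (S.piecewise_congr h fun _ _ ↦ rfl)

theorem condExpect_mul_of_dependsOn {S : Finset α} {f : (α → β) → ℝ} (hf : DependsOn f S)
    (g : (α → β) → ℝ) : condExpect S (f * g) = f * condExpect S g := by
  ext φ
  simp only [condExpect, Pi.mul_apply, mul_expect]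
  refine expect_congr rfl fun ψ _ ↦ ?_
  rw [hf fun i hi ↦ piecewise_eq_of_mem S φ ψ hi]

theorem condExpect_of_dependsOn {S : Finset α} {f : (α → β) → ℝ} (hf : DependsOn f S) :
    condExpect S f = f := by
  ext φ
  have : Nonempty (α → β) := ⟨φ⟩
  have f_piecewise (ψ : α → β) : f (S.piecewise φ ψ) = f φ :=
    hf fun i hi ↦ S.piecewise_eq_of_mem φ ψ hi
  simp only [condExpect, f_piecewise, Fintype.expect_const]

theorem condExpect_inter_of_dependsOn {V : Finset α} {f : (α → β) → ℝ} (hf : DependsOn f V)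
    (Y : Finset α) : condExpect (V ∩ Y) f = condExpect Y f := by
  ext φ
  refine expect_congr rfl fun ψ _ ↦ hf fun i hi ↦ ?_
  have hi : i ∈ V := hi
  by_cases hY : i ∈ Y <;> simp [hi, hY]

theorem condExpect_comp_perm {S : Finset α} {π : Equiv.Perm α} (hπ : ∀ i ∈ S, π i = i)
    (f : (α → β) → ℝ) : condExpect S (fun χ ↦ f (χ ∘ π)) = condExpect S f := by
  ext φ
  refine Fintype.expect_equiv (π.symm.arrowCongr (.refl β)) _ _ fun ψ ↦ congrArg f ?_
  ext i
  have hmem : π i ∈ S ↔ i ∈ S :=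
    ⟨fun h ↦ by rwa [π.injective (hπ _ h)] at h, fun h ↦ by rwa [hπ i h]⟩
  by_cases hi : i ∈ S
  · simp [hi, hπ i hi]
  · simp [hi, hmem]

theorem expect_condExpect (S : Finset α) (f : (α → β) → ℝ) :
    𝔼 φ, condExpect S f φ = 𝔼 φ, f φ := by
  have swap_involutive : Function.Involutive fun p : (α → β) × (α → β) ↦
      (S.piecewise p.1 p.2, S.piecewise p.2 p.1) := by
    rintro ⟨φ, ψ⟩
    ext i <;> by_cases hi : i ∈ S <;> simp [hi]
  calc 𝔼 φ, condExpect S f φ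
      = 𝔼 p : (α → β) × (α → β), f (S.piecewise p.1 p.2) := by
        rw [← univ_product_univ, expect_product]; rfl
    _ = 𝔼 p : (α → β) × (α → β), f p.1 :=
        Fintype.expect_equiv swap_involutive.toPerm _ _ fun _ ↦ rfl
    _ = 𝔼 φ, f φ := by
        rw [← univ_product_univ, expect_product]
        refine expect_congr rfl fun φ _ ↦ ?_
        exact expect_const ⟨φ, mem_univ φ⟩ (f φ)

theorem condExpect_condExpect {Z V : Finset α} (h : Z ⊆ V) (f : (α → β) → ℝ) :
    condExpect Z (condExpect V f) = condExpect Z f := by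
  ext φ
  unfold condExpect
  rw [← expect_condExpect V fun ψ ↦ f (Z.piecewise φ ψ)]
  refine expect_congr rfl fun ψ _ ↦ expect_congr rfl fun χ _ ↦ congrArg f ?_
  ext i
  by_cases hZ : i ∈ Z
  · simp [hZ, h hZ]
  · by_cases hV : i ∈ V <;> simp [hZ, hV]

theorem expect_mul_condExpect {S : Finset α} {f : (α → β) → ℝ} (hf : DependsOn f S)
    (g : (α → β) → ℝ) : 𝔼 φ, f φ * condExpect S g φ = 𝔼 φ, f φ * g φ := by
  simpa only [condExpect_mul_of_dependsOn hf, Pi.mul_apply] using expect_condExpect S (f * g)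

theorem expect_prod_apply (h : α → β → ℝ) :
    𝔼 ψ : α → β, ∏ i, h i (ψ i) = ∏ i, 𝔼 y, h i y := by
  simp only [Fintype.expect_eq_sum_div_card, prod_div_distrib, Fintype.prod_sum, prod_const,
    card_univ, Fintype.card_fun, Nat.cast_pow]

theorem expect_mul_prod_apply [Nonempty β] {P : Finset α} {F : (α → β) → ℝ}
    {g : (α → β) → β → ℝ} (hF : DependsOn F ↑(Pᶜ)) (hg : DependsOn g ↑(Pᶜ)) :
    𝔼 φ, F φ * ∏ u ∈ P, g φ (φ u) = 𝔼 φ, F φ * (𝔼 y, g φ y) ^ #P := by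
  have cond_prod (φ : α → β) :
      condExpect Pᶜ (fun χ ↦ ∏ u ∈ P, g χ (χ u)) φ = (𝔼 y, g φ y) ^ #P := by
    calc condExpect Pᶜ (fun χ ↦ ∏ u ∈ P, g χ (χ u)) φ
        = 𝔼 ψ : α → β, ∏ u, if u ∈ P then g φ (ψ u) else 1 := by
          refine expect_congr rfl fun ψ _ ↦ ?_
          rw [Fintype.prod_ite_mem]
          refine prod_congr rfl fun u hu ↦ ?_
          rw [hg (y := φ) fun i hi ↦ piecewise_eq_of_mem Pᶜ φ ψ hi,
            piecewise_eq_of_notMem _ _ _ (notMem_compl.2 hu)]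
      _ = ∏ u, 𝔼 y, if u ∈ P then g φ y else 1 :=
          expect_prod_apply fun u y ↦ if u ∈ P then g φ y else 1
      _ = ∏ u, if u ∈ P then 𝔼 y, g φ y else 1 := by
          refine prod_congr rfl fun u _ ↦ ?_
          split_ifs
          exacts [rfl, Fintype.expect_one]
      _ = (𝔼 y, g φ y) ^ #P := by rw [Fintype.prod_ite_mem, prod_const]
  rw [← expect_mul_condExpect hF]
  simp only [cond_prod]

end CondExpect

section Moments

variable {Ω : Type*} [Fintype Ω]

theorem expect_mul_expect_le_of_monovary {f g w : Ω → ℝ} (hfg : Monovary f g)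
    (hw : ∀ x, 0 ≤ w x) :
    (𝔼 x, w x * f x) * (𝔼 x, w x * g x) ≤ (𝔼 x, w x) * 𝔼 x, w x * (f x * g x) := by
  have pairs_nonneg : 0 ≤ 𝔼 x, 𝔼 y, w x * w y * ((f x - f y) * (g x - g y)) := by
    refine expect_nonneg fun x _ ↦ expect_nonneg fun y _ ↦
      mul_nonneg (mul_nonneg (hw x) (hw y)) ?_
    exact monovary_iff_forall_mul_nonneg.1 hfg y x
  have pairs_eq : 𝔼 x, 𝔼 y, w x * w y * ((f x - f y) * (g x - g y)) =
      2 * ((𝔼 x, w x) * 𝔼 x, w x * (f x * g x)) - 2 * ((𝔼 x, w x * f x) * 𝔼 x, w x * g x) := by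
    have expand (x y : Ω) : w x * w y * ((f x - f y) * (g x - g y)) =
        w x * (f x * g x) * w y + w x * (w y * (f y * g y)) -
          w x * f x * (w y * g y) - w x * g x * (w y * f y) := by ring
    simp only [expand, expect_sub_distrib, expect_add_distrib, ← mul_expect, ← expect_mul]
    ring
  linarith

theorem mul_expect_mul_pow_le {w z : Ω → ℝ} {q : ℝ} (hw : ∀ x, 0 ≤ w x) (hz : ∀ x, 0 ≤ z x)
    (h : q * 𝔼 x, w x ≤ 𝔼 x, w x * z x) (s : ℕ) :
    q * 𝔼 x, w x * z x ^ s ≤ 𝔼 x, w x * z x ^ (s + 1) := by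
  have moment_nonneg : 0 ≤ 𝔼 x, w x * z x ^ s :=
    expect_nonneg fun x _ ↦ mul_nonneg (hw x) (pow_nonneg (hz x) s)
  rcases (expect_nonneg fun x _ ↦ hw x : 0 ≤ 𝔼 x, w x).eq_or_lt with h0 | hpos
  · have hw0 (x : Ω) : w x = 0 :=
      (expect_eq_zero_iff_of_nonneg fun x _ ↦ hw x).1 h0.symm x (mem_univ x)
    simp [hw0]
  · have monovary_pow : Monovary z (fun x ↦ z x ^ s) :=
      fun x y hxy ↦ (lt_of_pow_lt_pow_left₀ s (hz y) hxy).le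
    have chebyshev := expect_mul_expect_le_of_monovary monovary_pow hw
    simp only [← pow_succ'] at chebyshev
    refine le_of_mul_le_mul_left ?_ hpos
    linarith [mul_le_mul_of_nonneg_right h moment_nonneg]

theorem pow_mul_expect_le_expect_mul_pow {w z : Ω → ℝ} {q : ℝ} (hw : ∀ x, 0 ≤ w x)
    (hz : ∀ x, 0 ≤ z x) (hq : 0 ≤ q) (h : q * 𝔼 x, w x ≤ 𝔼 x, w x * z x) (s : ℕ) :
    q ^ s * 𝔼 x, w x ≤ 𝔼 x, w x * z x ^ s := by
  induction s with
  | zero => simp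
  | succ s ih =>
    calc q ^ (s + 1) * 𝔼 x, w x = q * (q ^ s * 𝔼 x, w x) := by ring
      _ ≤ q * 𝔼 x, w x * z x ^ s := mul_le_mul_of_nonneg_left ih hq
      _ ≤ 𝔼 x, w x * z x ^ (s + 1) := mul_expect_mul_pow_le hw hz h s

end Moments

section Entropy

variable {Ω : Type*} [Fintype Ω]

/-- The differential entropy, relative to the uniform distribution on `Ω`, of the distribution with
density `w`. -/
noncomputable def entropy (w : Ω → ℝ) : ℝ :=
  𝔼 x, Real.negMulLog (w x)

theorem exp_entropy_le_expect {w h : Ω → ℝ} (hw : ∀ x, 0 ≤ w x) (hh : ∀ x, 0 ≤ h x)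
    (hw1 : 𝔼 x, w x = 1) (hwh : ∀ x, w x ≠ 0 → h x = 1) :
    Real.exp (entropy w) ≤ 𝔼 x, h x := by
  set b := 𝔼 x, h x with hb
  have b_pos : 0 < b := by
    obtain ⟨x, -, hx⟩ : ∃ x ∈ univ, w x ≠ 0 := by
      by_contra! hall
      simp [expect_eq_zero hall] at hw1
    exact expect_pos' (fun x _ ↦ hh x) ⟨x, mem_univ x, by simp [hwh x hx]⟩
  have pointwise (x : Ω) :
      b * Real.negMulLog (w x) ≤ h x - w x * b + w x * (b * Real.log b) := by
    by_cases hx : w x = 0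
    · simpa [hx] using hh x
    · have := Real.negMulLog_le_one_sub_self (x := w x * b) (mul_nonneg (hw x) b_pos.le)
      rw [Real.negMulLog_mul] at this
      rw [hwh x hx]
      simp only [Real.negMulLog] at this ⊢
      linarith
  have averaged : b * entropy w ≤ b * Real.log b := by
    calc b * entropy w ≤ 𝔼 x, (h x - w x * b + w x * (b * Real.log b)) := by
          rw [entropy, mul_expect]
          exact expect_le_expect fun x _ ↦ pointwise x
      _ = b * Real.log b := by
          rw [expect_add_distrib, expect_sub_distrib, ← expect_mul, ← expect_mul, hw1, ← hb]
          ring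
  exact (Real.le_log_iff_exp_le b_pos).1 (le_of_mul_le_mul_left averaged b_pos)

end Entropy

section Gluing

variable {α β : Type*} [Fintype α] [DecidableEq α] [Fintype β]
  {V Y : Finset α} {w v : (α → β) → ℝ}

/-- The conditionally independent coupling of a density `w` in the coordinates `V` and a density `v`
in the coordinates `Y` that have the same marginal on `V ∩ Y`. Where that marginal vanishes, so do
`w` and `v`, and the convention `x / 0 = 0` gives the right value. -/
noncomputable def glue (V Y : Finset α) (w v : (α → β) → ℝ) : (α → β) → ℝ :=
  w * v / condExpect (V ∩ Y) w

theorem glue_nonneg (hw : ∀ φ, 0 ≤ w φ) (hv : ∀ φ, 0 ≤ v φ) (φ : α → β) : 0 ≤ glue V Y w v φ :=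
  div_nonneg (mul_nonneg (hw φ) (hv φ)) (condExpect_nonneg hw φ)

theorem dependsOn_glue (hw : DependsOn w V) (hv : DependsOn v Y) :
    DependsOn (glue V Y w v) ↑(V ∪ Y) := by
  intro φ χ h
  have hV : ∀ i ∈ (V : Set α), φ i = χ i := fun i hi ↦ h i (mem_union_left Y hi)
  have hY : ∀ i ∈ (Y : Set α), φ i = χ i := fun i hi ↦ h i (mem_union_right V hi)
  have hVY : ∀ i ∈ (↑(V ∩ Y) : Set α), φ i = χ i := fun i hi ↦ hV i (mem_of_mem_inter_left hi)
  simp only [glue, Pi.div_apply, Pi.mul_apply, hw hV, hv hY, dependsOn_condExpect _ w hVY]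

theorem glue_comm (h : condExpect (V ∩ Y) w = condExpect (V ∩ Y) v) :
    glue V Y w v = glue Y V v w := by
  rw [glue, glue, h, mul_comm, inter_comm]

theorem condExpect_mul_div_condExpect {f : (α → β) → ℝ} (hf : DependsOn f V) (hv : DependsOn v Y)
    (hf0 : ∀ φ, condExpect (V ∩ Y) v φ = 0 → f φ = 0) :
    condExpect V (f * (v / condExpect (V ∩ Y) v)) = f := by
  have dependsOn_inv : DependsOn (condExpect (V ∩ Y) v)⁻¹ V := fun φ χ h ↦
    congrArg (·⁻¹) (dependsOn_condExpect _ v fun i hi ↦ h i (mem_of_mem_inter_left hi))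
  rw [condExpect_mul_of_dependsOn hf, div_eq_inv_mul, condExpect_mul_of_dependsOn dependsOn_inv,
    ← condExpect_inter_of_dependsOn hv V, inter_comm Y V]
  ext φ
  by_cases hφ : condExpect (V ∩ Y) v φ = 0
  · simp [hf0 φ hφ]
  · simp [inv_mul_cancel₀ hφ]

theorem expect_mul_div_condExpect {f : (α → β) → ℝ} (hf : DependsOn f V) (hv : DependsOn v Y)
    (hf0 : ∀ φ, condExpect (V ∩ Y) v φ = 0 → f φ = 0) :
    𝔼 φ, f φ * (v φ / condExpect (V ∩ Y) v φ) = 𝔼 φ, f φ := by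
  rw [← expect_condExpect V fun φ ↦ f φ * (v φ / condExpect (V ∩ Y) v φ)]
  exact expect_congr rfl fun φ _ ↦ congrFun (condExpect_mul_div_condExpect hf hv hf0) φ

theorem expect_mul_log_condExpect (S : Finset α) (w : (α → β) → ℝ) :
    𝔼 φ, w φ * Real.log (condExpect S w φ) = -entropy (condExpect S w) := by
  have log_dep : DependsOn (fun φ ↦ Real.log (condExpect S w φ)) S :=
    fun _ _ h ↦ congrArg Real.log (dependsOn_condExpect S w h)
  rw [entropy, ← expect_neg_distrib]
  simpa only [Real.negMulLog, neg_mul, neg_neg, mul_comm (Real.log _)] using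
    (expect_mul_condExpect log_dep w).symm

theorem negMulLog_mul_div (a b c : ℝ) :
    Real.negMulLog (a * b / c) = Real.negMulLog a * (b / c) + Real.negMulLog b * (a / c) +
      a * Real.log c * (b / c) := by
  rcases eq_or_ne a 0 with rfl | ha
  · simp
  rcases eq_or_ne b 0 with rfl | hb
  · simp
  rcases eq_or_ne c 0 with rfl | hc
  · simp
  rw [Real.negMulLog, Real.log_div (mul_ne_zero ha hb) hc, Real.log_mul ha hb]
  simp only [Real.negMulLog]
  ring

variable (hw : ∀ φ, 0 ≤ w φ) (hv : ∀ φ, 0 ≤ v φ) (hwV : DependsOn w V) (hvY : DependsOn v Y)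
  (h : condExpect (V ∩ Y) w = condExpect (V ∩ Y) v)
include hw hwV hvY h

theorem condExpect_glue : condExpect V (glue V Y w v) = w := by
  rw [glue, h, mul_div_assoc]
  exact condExpect_mul_div_condExpect hwV hvY fun φ hφ ↦
    eq_zero_of_condExpect_eq_zero hw (by rwa [h])

include hv

theorem entropy_glue :
    entropy (glue V Y w v) = entropy w + entropy v - entropy (condExpect (V ∩ Y) w) := by
  set m := condExpect (V ∩ Y) w with hm
  have w_eq_zero (φ : α → β) (hφ : m φ = 0) : w φ = 0 := eq_zero_of_condExpect_eq_zero hw hφ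
  have v_eq_zero (φ : α → β) (hφ : m φ = 0) : v φ = 0 :=
    eq_zero_of_condExpect_eq_zero hv (by rwa [← h])
  have negMulLog_w : 𝔼 φ, Real.negMulLog (w φ) * (v φ / m φ) = entropy w := by
    rw [h]
    refine expect_mul_div_condExpect (fun _ _ hφ ↦ congrArg _ (hwV hφ)) hvY fun φ hφ ↦ ?_
    rw [w_eq_zero φ (by rwa [h]), Real.negMulLog_zero]
  have negMulLog_v : 𝔼 φ, Real.negMulLog (v φ) * (w φ / m φ) = entropy v := by
    rw [hm, inter_comm]
    refine expect_mul_div_condExpect (fun _ _ hφ ↦ congrArg _ (hvY hφ)) hwV fun φ hφ ↦ ?_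
    rw [v_eq_zero φ (by rwa [hm, inter_comm]), Real.negMulLog_zero]
  have mul_log_m : 𝔼 φ, w φ * Real.log (m φ) * (v φ / m φ) = -entropy m := by
    rw [← expect_mul_log_condExpect, ← hm, h]
    refine expect_mul_div_condExpect (fun φ χ hφ ↦ ?_) hvY fun φ hφ ↦ ?_
    · have hm_eq := dependsOn_condExpect (V ∩ Y) v fun i hi ↦ hφ i (mem_of_mem_inter_left hi)
      rw [hwV hφ, hm_eq]
    · rw [w_eq_zero φ (by rwa [h]), zero_mul]
  calc entropy (glue V Y w v)
      = 𝔼 φ, (Real.negMulLog (w φ) * (v φ / m φ) + Real.negMulLog (v φ) * (w φ / m φ) +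
          w φ * Real.log (m φ) * (v φ / m φ)) :=
        expect_congr rfl fun φ _ ↦ negMulLog_mul_div (w φ) (v φ) (m φ)
    _ = entropy w + entropy v - entropy m := by
        rw [expect_add_distrib, expect_add_distrib, negMulLog_w, negMulLog_v, mul_log_m]
        ring

end Gluing

section HomDensityOn

variable {α β : Type*} {H : SimpleGraph α} {G : SimpleGraph β}

/-- The assignment `φ` restricts to a homomorphism from the subgraph of `H` induced on `X`. -/
def IsHomOn (H : SimpleGraph α) (G : SimpleGraph β) (X : Finset α) (φ : α → β) : Prop :=
  ∀ u ∈ X, ∀ v ∈ X, H.Adj u v → G.Adj (φ u) (φ v)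

open Classical in
/-- The indicator function of `IsHomOn`. -/
noncomputable def homInd (H : SimpleGraph α) (G : SimpleGraph β) (X : Finset α) (φ : α → β) : ℝ :=
  if IsHomOn H G X φ then 1 else 0

theorem IsHomOn.mono {S X : Finset α} (hS : S ⊆ X) {φ : α → β} (h : IsHomOn H G X φ) :
    IsHomOn H G S φ :=
  fun u hu v hv ↦ h u (hS hu) v (hS hv)

theorem homInd_eq_zero_or_one (X : Finset α) (φ : α → β) :
    homInd H G X φ = 0 ∨ homInd H G X φ = 1 := by
  unfold homInd
  split_ifs <;> simp

theorem homInd_ne_zero {X : Finset α} {φ : α → β} : homInd H G X φ ≠ 0 ↔ IsHomOn H G X φ := by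
  simp [homInd]

theorem homInd_of_isHomOn {X : Finset α} {φ : α → β} (h : IsHomOn H G X φ) :
    homInd H G X φ = 1 :=
  if_pos h

theorem homInd_nonneg (X : Finset α) (φ : α → β) : 0 ≤ homInd H G X φ := by
  unfold homInd
  positivity

theorem homInd_le_homInd {S X : Finset α} (hS : S ⊆ X) (φ : α → β) :
    homInd H G X φ ≤ homInd H G S φ := by
  by_cases hX : IsHomOn H G X φ
  · rw [homInd_of_isHomOn hX, homInd_of_isHomOn (hX.mono hS)]
  · rw [homInd, if_neg hX]
    exact homInd_nonneg S φ

theorem dependsOn_homInd (X : Finset α) : DependsOn (homInd H G X) X := by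
  intro φ ψ h
  have isHomOn_iff : IsHomOn H G X φ ↔ IsHomOn H G X ψ :=
    forall₂_congr fun u hu ↦ forall₂_congr fun v hv ↦ by rw [h u hu, h v hv]
  rw [homInd, homInd, propext isHomOn_iff]

variable [Fintype α] [DecidableEq α] [Fintype β]

variable (H G) in
/-- The homomorphism density of the subgraph of `H` induced on `X`, with assignments defined on all
of `α` so that different sets `X` share one probability space. -/
noncomputable def homDensityOn (X : Finset α) : ℝ :=
  𝔼 φ : α → β, homInd H G X φ

variable (H G) in
/-- The density of a uniformly random homomorphism from the subgraph of `H` induced on `X`, extended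
by independent uniform coordinates outside `X`. It is identically zero if there is no such
homomorphism. -/
noncomputable def uniformHom (X : Finset α) (φ : α → β) : ℝ :=
  homInd H G X φ / homDensityOn H G X

theorem homDensityOn_nonneg (X : Finset α) : 0 ≤ homDensityOn H G X :=
  expect_nonneg fun φ _ ↦ homInd_nonneg X φ

theorem homDensityOn_le_homDensityOn {S X : Finset α} (hS : S ⊆ X) :
    homDensityOn H G X ≤ homDensityOn H G S :=
  expect_le_expect fun φ _ ↦ homInd_le_homInd hS φ

theorem homDensityOn_empty [Nonempty β] : homDensityOn H G ∅ = 1 := by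
  simp [homDensityOn, homInd, IsHomOn]

variable (H G) in
theorem homDensityOn_univ : homDensityOn H G univ = homDensity H G := by
  classical
  have card_hom : #{φ : α → β | IsHomOn H G univ φ} = Nat.card (H →g G) := by
    rw [← Fintype.card_subtype, ← Nat.card_eq_fintype_card]
    exact Nat.card_congr
      { toFun φ := ⟨φ.1, fun {u v} h ↦ φ.2 u (mem_univ u) v (mem_univ v) h⟩
        invFun f := ⟨f, fun _ _ _ _ h ↦ f.map_rel h⟩ }
  rw [homDensityOn, homDensity, Fintype.expect_eq_sum_div_card, Fintype.card_fun, Nat.cast_pow,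
    ← card_hom, ← sum_boole]
  simp only [homInd]

theorem uniformHom_nonneg (X : Finset α) (φ : α → β) : 0 ≤ uniformHom H G X φ :=
  div_nonneg (homInd_nonneg X φ) (homDensityOn_nonneg X)

theorem dependsOn_uniformHom (X : Finset α) : DependsOn (uniformHom H G X) X :=
  fun _ _ h ↦ congrArg (· / homDensityOn H G X) (dependsOn_homInd X h)

theorem expect_uniformHom {X : Finset α} (hX : homDensityOn H G X ≠ 0) :
    𝔼 φ : α → β, uniformHom H G X φ = 1 := by
  simp only [uniformHom, ← expect_div]
  exact div_self hX

theorem isHomOn_of_uniformHom_ne_zero {X : Finset α} {φ : α → β}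
    (h : uniformHom H G X φ ≠ 0) : IsHomOn H G X φ :=
  homInd_ne_zero.1 (div_ne_zero_iff.1 h).1

theorem entropy_uniformHom (X : Finset α) :
    entropy (uniformHom H G X) = Real.log (homDensityOn H G X) := by
  have pointwise (φ : α → β) : Real.negMulLog (uniformHom H G X φ) =
      homInd H G X φ * (Real.log (homDensityOn H G X) / homDensityOn H G X) := by
    rcases homInd_eq_zero_or_one (H := H) (G := G) X φ with h | h
    · simp [uniformHom, h]
    · simp only [uniformHom, h, Real.negMulLog, one_div, Real.log_inv]
      ring
  simp only [entropy, pointwise, ← expect_mul]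
  change homDensityOn H G X * _ = _
  rcases eq_or_ne (homDensityOn H G X) 0 with h | h
  · simp [h]
  · field_simp

end HomDensityOn

section CommonNeighbors

variable {α β : Type*} {H : SimpleGraph α} {G : SimpleGraph β} {B P : Finset α}

theorem isHomOn_union_iff [DecidableEq α] (hP : H.IsIndepSet P) (hBP : H.IsCompleteBetween B P)
    {φ : α → β} :
    IsHomOn H G (B ∪ P) φ ↔ IsHomOn H G B φ ∧ ∀ u ∈ P, ∀ b ∈ B, G.Adj (φ b) (φ u) := by
  constructor
  · intro h
    exact ⟨h.mono subset_union_left, fun u hu b hb ↦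
      h b (mem_union_left P hb) u (mem_union_right B hu) (hBP hb hu)⟩
  · rintro ⟨hB, hadj⟩ u hu v hv huv
    rcases mem_union.1 hu with hu | hu <;> rcases mem_union.1 hv with hv | hv
    · exact hB u hu v hv huv
    · exact hadj v hv u hu
    · exact (hadj u hu v hv).symm
    · exact absurd huv (hP hu hv huv.ne)

variable [DecidableRel G.Adj]

variable (G) in
/-- The indicator function of the common neighbourhood in `G` of the image of `B` under `φ`. -/
def commonNbr (B : Finset α) (φ : α → β) (y : β) : ℝ :=
  ∏ b ∈ B, G.adjMatrix ℝ (φ b) y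

theorem commonNbr_eq_ite (B : Finset α) (φ : α → β) (y : β) :
    commonNbr G B φ y = if ∀ b ∈ B, G.Adj (φ b) y then 1 else 0 := by
  simp only [commonNbr, SimpleGraph.adjMatrix_apply, prod_boole]

theorem commonNbr_eq_zero_or_one (B : Finset α) (φ : α → β) (y : β) :
    commonNbr G B φ y = 0 ∨ commonNbr G B φ y = 1 := by
  rw [commonNbr_eq_ite]
  split_ifs <;> simp

theorem dependsOn_commonNbr (B : Finset α) : DependsOn (commonNbr G B) B := fun φ χ h ↦ by
  ext y
  exact prod_congr rfl fun b hb ↦ by rw [h b hb]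

theorem homInd_union [DecidableEq α] (hP : H.IsIndepSet P) (hBP : H.IsCompleteBetween B P)
    (φ : α → β) :
    homInd H G (B ∪ P) φ = homInd H G B φ * ∏ u ∈ P, commonNbr G B φ (φ u) := by
  classical
  rw [homInd, if_congr (isHomOn_union_iff hP hBP) rfl rfl]
  simp only [homInd, commonNbr_eq_ite, prod_boole, ite_and, ite_mul, one_mul, zero_mul]

variable [Fintype β]

variable (G) in
/-- The density of the common neighbourhood in `G` of the image of `B` under `φ`. -/
noncomputable def commonNbrDensity (B : Finset α) (φ : α → β) : ℝ :=
  𝔼 y, commonNbr G B φ y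

theorem commonNbrDensity_nonneg (B : Finset α) (φ : α → β) : 0 ≤ commonNbrDensity G B φ := by
  refine expect_nonneg fun y _ ↦ ?_
  rw [commonNbr_eq_ite]
  positivity

variable [Fintype α] [DecidableEq α] [Nonempty β]

theorem expect_homInd_union_mul_prod (hP : H.IsIndepSet P) (hBP : H.IsCompleteBetween B P)
    (f : β → ℝ) :
    𝔼 φ : α → β, homInd H G (B ∪ P) φ * ∏ u ∈ B ∪ P, f (φ u) =
      𝔼 φ : α → β, (homInd H G B φ * ∏ u ∈ B, f (φ u)) *
        (𝔼 y, commonNbr G B φ y * f y) ^ #P := by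
  have disj : Disjoint B P := disjoint_coe.1 hBP.disjoint
  have B_subset : (B : Set α) ⊆ ↑(Pᶜ) := coe_subset.2 (subset_compl_iff_disjoint_right.2 disj)
  have base_dep : DependsOn (fun φ : α → β ↦ homInd H G B φ * ∏ u ∈ B, f (φ u)) ↑(Pᶜ) :=
    DependsOn.mono B_subset fun φ χ h ↦ by
      simp only [dependsOn_homInd B h, prod_congr rfl fun u hu ↦ congrArg f (h u hu)]
  have nbr_dep : DependsOn (fun (φ : α → β) y ↦ commonNbr G B φ y * f y) ↑(Pᶜ) :=
    DependsOn.mono B_subset fun φ χ h ↦ by simp only [dependsOn_commonNbr B h]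
  rw [← expect_mul_prod_apply base_dep nbr_dep]
  refine expect_congr rfl fun φ _ ↦ ?_
  rw [homInd_union hP hBP, prod_union disj, prod_mul_distrib]
  ring

theorem homDensityOn_union (hP : H.IsIndepSet P) (hBP : H.IsCompleteBetween B P) :
    homDensityOn H G (B ∪ P) = 𝔼 φ, homInd H G B φ * commonNbrDensity G B φ ^ #P := by
  simpa [homDensityOn, commonNbrDensity] using
    expect_homInd_union_mul_prod (G := G) hP hBP fun _ ↦ 1

theorem expect_homInd_union_mul_commonNbrDensity (hP : H.IsIndepSet P)
    (hBP : H.IsCompleteBetween B P) :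
    𝔼 φ, homInd H G (B ∪ P) φ * commonNbrDensity G (B ∪ P) φ =
      𝔼 φ, homInd H G B φ *
        𝔼 x, commonNbr G B φ x * (𝔼 y, G.adjMatrix ℝ x y * commonNbr G B φ y) ^ #P := by
  calc 𝔼 φ, homInd H G (B ∪ P) φ * commonNbrDensity G (B ∪ P) φ
      = 𝔼 x, 𝔼 φ, homInd H G (B ∪ P) φ * ∏ u ∈ B ∪ P, G.adjMatrix ℝ (φ u) x := by
        simp only [commonNbrDensity, commonNbr, mul_expect]
        exact expect_comm ..
    _ = 𝔼 x, 𝔼 φ, (homInd H G B φ * commonNbr G B φ x) *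
          (𝔼 y, commonNbr G B φ y * G.adjMatrix ℝ y x) ^ #P :=
        expect_congr rfl fun x _ ↦
          expect_homInd_union_mul_prod hP hBP fun y ↦ G.adjMatrix ℝ y x
    _ = _ := by
        rw [expect_comm]
        simp only [mul_assoc, ← mul_expect]
        refine expect_congr rfl fun φ _ ↦ ?_
        simp only [fun x y ↦ (G.isSymm_adjMatrix (α := ℝ)).apply x y, mul_comm (commonNbr G B φ _)]

end CommonNeighbors

section EdgesOn

variable {α : Type*} {H : SimpleGraph α}

open Classical in
variable (H) in
/-- The edges of `H` with both endpoints in `X`. -/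
noncomputable def edgesOn (X : Finset α) : Finset (Sym2 α) :=
  {e ∈ X.sym2 | e ∈ H.edgeSet}

theorem mem_edgesOn {X : Finset α} {e : Sym2 α} :
    e ∈ edgesOn H X ↔ e ∈ H.edgeSet ∧ ∀ v ∈ e, v ∈ X := by
  simp only [edgesOn, mem_filter, mem_sym2_iff, and_comm]

theorem edgesOn_mono {S X : Finset α} (hS : S ⊆ X) : edgesOn H S ⊆ edgesOn H X := fun _ he ↦
  mem_edgesOn.2 ⟨(mem_edgesOn.1 he).1, fun v hv ↦ hS ((mem_edgesOn.1 he).2 v hv)⟩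

theorem card_edgesOn (X : Finset α) :
    #(edgesOn H X) = Nat.card {e : Sym2 α // e ∈ H.edgeSet ∧ ∀ v ∈ e, v ∈ X} :=
  (Nat.subtype_card _ fun _ ↦ mem_edgesOn).symm

variable (H) in
theorem card_edgesOn_univ [Fintype α] : #(edgesOn H univ) = edgeCount H :=
  (Nat.subtype_card _ fun e ↦ by simp [mem_edgesOn]).symm

variable [DecidableEq α]

theorem card_edgesOn_add_card_edgesOn_le (X Y : Finset α) :
    #(edgesOn H X) + #(edgesOn H Y) ≤ #(edgesOn H (X ∪ Y)) + #(edgesOn H (X ∩ Y)) := by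
  have inter_eq : edgesOn H X ∩ edgesOn H Y = edgesOn H (X ∩ Y) := by
    ext e
    simp only [mem_inter, mem_edgesOn]
    grind
  rw [← card_union_add_card_inter, inter_eq]
  gcongr
  exact union_subset (edgesOn_mono subset_union_left) (edgesOn_mono subset_union_right)

theorem card_edgesOn_insert [DecidableRel H.Adj] {X : Finset α} {v : α} (hv : v ∉ X) :
    #(edgesOn H (insert v X)) = #{u ∈ X | H.Adj v u} + #(edgesOn H X) := by
  have edges_eq : edgesOn H (insert v X) = {u ∈ X | H.Adj v u}.image (s(v, ·)) ∪ edgesOn H X := by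
    ext e
    induction e with | _ x y
    simp only [mem_edgesOn, mem_union, mem_image, mem_filter, SimpleGraph.mem_edgeSet,
      Sym2.forall_mem_pair, mem_insert, Sym2.eq_iff]
    have := H.adj_comm x y
    have := H.irrefl (v := v)
    grind
  have disj : Disjoint ({u ∈ X | H.Adj v u}.image (s(v, ·))) (edgesOn H X) := by
    simp only [disjoint_left, mem_image, mem_edgesOn]
    rintro _ ⟨u, -, rfl⟩ ⟨-, h⟩
    exact hv (h v (Sym2.mem_mk_left v u))
  rw [edges_eq, card_union_of_disjoint disj,
    card_image_of_injective _ fun _ _ ↦ Sym2.congr_right.1]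

omit [DecidableEq α] in
theorem sum_adjMatrix_eq_two_mul_card_edgesOn [DecidableRel H.Adj] (X : Finset α) :
    ∑ x ∈ X, ∑ y ∈ X, H.adjMatrix ℝ x y = 2 * #(edgesOn H X) := by
  classical
  induction X using Finset.induction_on with
  | empty => simp [edgesOn]
  | insert v X hv ih =>
    have degree_eq : ∑ y ∈ X, H.adjMatrix ℝ v y = #{u ∈ X | H.Adj v u} := by
      simp only [H.adjMatrix_apply, sum_boole]
    have codegree_eq : ∑ x ∈ X, H.adjMatrix ℝ x v = #{u ∈ X | H.Adj v u} := by
      simp only [H.adjMatrix_apply, H.adj_comm v, sum_boole]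
    have diag : H.adjMatrix ℝ v v = 0 := by simp
    simp only [sum_insert hv, sum_add_distrib, ih, degree_eq, codegree_eq, diag,
      card_edgesOn_insert hv, Nat.cast_add]
    ring

end EdgesOn

section LocallyDense

variable {β : Type*} [Fintype β] {G : SimpleGraph β} [DecidableRel G.Adj] {ρ d : ℝ}

theorem LocallyDense.mul_sq_expect_le (hG : LocallyDense G ρ d) {C : β → ℝ}
    (hC : ∀ x, C x = 0 ∨ C x = 1) (hρ : ρ ≤ 𝔼 x, C x) :
    d * (𝔼 x, C x) ^ 2 ≤ 𝔼 x, C x * 𝔼 y, G.adjMatrix ℝ x y * C y := by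
  classical
  set X : Finset β := {x | C x = 1} with hX
  have C_eq (x : β) : C x = if x ∈ X then 1 else 0 := by
    rcases hC x with h | h <;> simp [hX, h]
  have expect_C : 𝔼 x, C x = #X / Fintype.card β := by
    simp [Fintype.expect_eq_sum_div_card, C_eq]
  have expect_adj : 𝔼 x, C x * 𝔼 y, G.adjMatrix ℝ x y * C y =
      2 * #(edgesOn G X) / Fintype.card β ^ 2 := by
    rw [← sum_adjMatrix_eq_two_mul_card_edgesOn]
    simp only [C_eq, mul_ite, mul_one, mul_zero, ite_mul, one_mul, zero_mul,
      Fintype.expect_eq_sum_div_card, Fintype.sum_ite_mem, ← sum_div, div_div, ← sq]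
  have X_large : ρ * Fintype.card β ≤ #X :=
    mul_le_of_le_div₀ (Nat.cast_nonneg _) (Nat.cast_nonneg _) (expect_C ▸ hρ)
  have edges_large := hG X X_large
  rw [← card_edgesOn] at edges_large
  rw [expect_C, expect_adj, div_pow, ← mul_div_assoc]
  exact div_le_div_of_nonneg_right (by linarith) (sq_nonneg _)

theorem LocallyDense.pow_mul_pow_mul_sub_le (hG : LocallyDense G ρ d) (hρ : 0 ≤ ρ) (hd : 0 ≤ d)
    {C : β → ℝ} (hC : ∀ x, C x = 0 ∨ C x = 1) (s : ℕ) :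
    d ^ s * (𝔼 x, C x) ^ s * (𝔼 x, C x - ρ) ≤
      𝔼 x, C x * (𝔼 y, G.adjMatrix ℝ x y * C y) ^ s := by
  have C_nonneg (x : β) : 0 ≤ C x := by rcases hC x with h | h <;> simp [h]
  have deg_nonneg (x : β) : 0 ≤ 𝔼 y, G.adjMatrix ℝ x y * C y :=
    expect_nonneg fun y _ ↦ mul_nonneg (by rw [G.adjMatrix_apply]; positivity) (C_nonneg y)
  have mean_nonneg : 0 ≤ 𝔼 x, C x := expect_nonneg fun x _ ↦ C_nonneg x
  have factor_nonneg : 0 ≤ d ^ s * (𝔼 x, C x) ^ s := by positivity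
  rcases lt_or_ge (𝔼 x, C x) ρ with h | h
  · exact (mul_nonpos_of_nonneg_of_nonpos factor_nonneg (sub_nonpos.2 h.le)).trans
      (expect_nonneg fun x _ ↦ mul_nonneg (C_nonneg x) (pow_nonneg (deg_nonneg x) s))
  have edge_density : d * (𝔼 x, C x) * 𝔼 x, C x ≤ 𝔼 x, C x * 𝔼 y, G.adjMatrix ℝ x y * C y := by
    rw [mul_assoc, ← sq]
    exact hG.mul_sq_expect_le hC h
  calc d ^ s * (𝔼 x, C x) ^ s * (𝔼 x, C x - ρ) ≤ (d * 𝔼 x, C x) ^ s * 𝔼 x, C x := by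
        rw [mul_pow]
        exact mul_le_mul_of_nonneg_left (sub_le_self _ hρ) factor_nonneg
    _ ≤ 𝔼 x, C x * (𝔼 y, G.adjMatrix ℝ x y * C y) ^ s :=
        pow_mul_expect_le_expect_mul_pow C_nonneg deg_nonneg (mul_nonneg hd mean_nonneg)
          edge_density s

end LocallyDense

section CompleteMultipartite

variable {α β : Type*} {H : SimpleGraph α} {X : Finset α}

theorem isCompleteMultipartite_induce_mono {S : Finset α} (hS : S ⊆ X)
    (hX : (H.induce (X : Set α)).IsCompleteMultipartite) :
    (H.induce (S : Set α)).IsCompleteMultipartite :=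
  hX.comap (SimpleGraph.induceHomOfLE H (coe_subset.2 hS))

variable [DecidableEq α] [DecidableRel H.Adj] {v : α}

theorem isIndepSet_insert_filter_not_adj
    (hX : (H.induce (↑(insert v X) : Set α)).IsCompleteMultipartite) :
    H.IsIndepSet (↑(insert v {u ∈ X | ¬H.Adj v u}) : Set α) := by
  have not_adj {u : α} (hu : u ∈ insert v {u ∈ X | ¬H.Adj v u}) :
      u ∈ insert v X ∧ ¬H.Adj v u := by
    have := H.irrefl (v := v)
    grind
  intro a ha b hb _
  obtain ⟨haX, hva⟩ := not_adj ha
  obtain ⟨hbX, hvb⟩ := not_adj hb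
  exact hX.trans ⟨a, haX⟩ ⟨v, mem_insert_self v X⟩ ⟨b, hbX⟩ (fun h ↦ hva h.symm) hvb

theorem isCompleteBetween_filter_adj
    (hX : (H.induce (↑(insert v X) : Set α)).IsCompleteMultipartite) :
    H.IsCompleteBetween (↑({u ∈ X | H.Adj v u}) : Set α)
      (↑(insert v {u ∈ X | ¬H.Adj v u}) : Set α) := by
  intro b hb a ha
  obtain ⟨hbX, hvb⟩ := mem_filter.1 (mem_coe.1 hb)
  rcases mem_insert.1 (mem_coe.1 ha) with rfl | ha
  · exact hvb.symm
  obtain ⟨haX, hva⟩ := mem_filter.1 ha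
  by_contra hba
  exact hX.trans ⟨v, mem_insert_self v X⟩ ⟨a, mem_insert_of_mem haX⟩ ⟨b, mem_insert_of_mem hbX⟩
    hva (fun h ↦ hba h.symm) hvb

theorem filter_adj_union_insert_filter_not_adj (v : α) (X : Finset α) :
    {u ∈ X | H.Adj v u} ∪ insert v {u ∈ X | ¬H.Adj v u} = insert v X := by
  rw [union_insert, filter_union_filter_not_eq]

end CompleteMultipartite

section MultipartiteCount

variable {α β : Type*} [Fintype α] [DecidableEq α] [Fintype β] [Nonempty β] {H : SimpleGraph α}
  {G : SimpleGraph β} [DecidableRel G.Adj] {ρ d : ℝ}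

theorem LocallyDense.le_expect_homInd_union_mul_commonNbrDensity (hG : LocallyDense G ρ d)
    (hρ : 0 ≤ ρ) (hd : 0 ≤ d) (hd1 : d ≤ 1) {B P : Finset α} (hP : H.IsIndepSet P)
    (hBP : H.IsCompleteBetween B P) (hPne : P.Nonempty)
    (hB : (d ^ #B - #B * ρ) * homDensityOn H G B ≤
      𝔼 φ, homInd H G B φ * commonNbrDensity G B φ) :
    (d ^ #(B ∪ P) - #(B ∪ P) * ρ) * homDensityOn H G (B ∪ P) ≤
      𝔼 φ, homInd H G (B ∪ P) φ * commonNbrDensity G (B ∪ P) φ := by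
  have disj : Disjoint B P := disjoint_coe.1 hBP.disjoint
  set T : ℝ := 𝔼 φ, homInd H G B φ * commonNbrDensity G B φ ^ #P with hT
  have T_nonneg : 0 ≤ T := expect_nonneg fun φ _ ↦
    mul_nonneg (homInd_nonneg B φ) (pow_nonneg (commonNbrDensity_nonneg B φ) _)
  have base_bound : (d ^ #B - #B * ρ) * T ≤
      𝔼 φ, homInd H G B φ * commonNbrDensity G B φ ^ (#P + 1) :=
    mul_expect_mul_pow_le (homInd_nonneg B) (commonNbrDensity_nonneg B) hB #P
  have star_bound : d ^ #P *
      (𝔼 φ, homInd H G B φ * commonNbrDensity G B φ ^ (#P + 1) - ρ * T) ≤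
      𝔼 φ, homInd H G (B ∪ P) φ * commonNbrDensity G (B ∪ P) φ := by
    rw [expect_homInd_union_mul_commonNbrDensity hP hBP, hT, mul_expect, ← expect_sub_distrib,
      mul_expect]
    refine expect_le_expect fun φ _ ↦ ?_
    calc _ = homInd H G B φ *
          (d ^ #P * commonNbrDensity G B φ ^ #P * (commonNbrDensity G B φ - ρ)) := by ring
      _ ≤ _ := mul_le_mul_of_nonneg_left
        (hG.pow_mul_pow_mul_sub_le hρ hd (commonNbr_eq_zero_or_one B φ) #P) (homInd_nonneg B φ)
  have error_bound : d ^ #P * ((#B + 1) * ρ) ≤ (#B + #P) * ρ := by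
    have card_P : (1 : ℝ) ≤ #P := mod_cast hPne.card_pos
    calc d ^ #P * ((#B + 1) * ρ) ≤ 1 * ((#B + 1) * ρ) := by
          gcongr
          exact pow_le_one₀ hd hd1
      _ ≤ (#B + #P) * ρ := by
          rw [one_mul]
          gcongr
  rw [homDensityOn_union hP hBP, card_union_of_disjoint disj, Nat.cast_add]
  calc (d ^ (#B + #P) - (#B + #P) * ρ) * T
      ≤ (d ^ (#B + #P) - d ^ #P * ((#B + 1) * ρ)) * T := by gcongr
    _ = d ^ #P * ((d ^ #B - #B * ρ) * T - ρ * T) := by ring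
    _ ≤ d ^ #P * (𝔼 φ, homInd H G B φ * commonNbrDensity G B φ ^ (#P + 1) - ρ * T) := by gcongr
    _ ≤ _ := star_bound

theorem LocallyDense.le_expect_homInd_mul_commonNbrDensity (hG : LocallyDense G ρ d)
    (hρ : 0 ≤ ρ) (hd : 0 ≤ d) (hd1 : d ≤ 1) {X : Finset α}
    (hX : (H.induce (X : Set α)).IsCompleteMultipartite) :
    (d ^ #X - #X * ρ) * homDensityOn H G X ≤
      𝔼 φ, homInd H G X φ * commonNbrDensity G X φ := by
  classical
  induction X using Finset.strongInduction with
  | H X ih =>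
    rcases X.eq_empty_or_nonempty with rfl | ⟨v, hv⟩
    · simp [homDensityOn, commonNbrDensity, commonNbr]
    rw [← insert_eq_self.2 hv] at hX
    have split := filter_adj_union_insert_filter_not_adj (H := H) v X
    rw [insert_eq_self.2 hv] at split
    have nbr_ssubset : {u ∈ X | H.Adj v u} ⊂ X :=
      filter_ssubset.2 ⟨v, hv, H.irrefl⟩
    have := hG.le_expect_homInd_union_mul_commonNbrDensity hρ hd hd1
      (isIndepSet_insert_filter_not_adj hX) (isCompleteBetween_filter_adj hX)
      (insert_nonempty v _) (ih _ nbr_ssubset (isCompleteMultipartite_induce_mono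
        ((filter_subset _ X).trans (subset_insert v X)) hX))
    rwa [split] at this

omit [DecidableRel G.Adj] in
theorem LocallyDense.mul_homDensityOn_le_homDensityOn_insert [DecidableRel H.Adj]
    (hG : LocallyDense G ρ d) (hρ : 0 ≤ ρ) (hd : 0 ≤ d) (hd1 : d ≤ 1) {X : Finset α} {v : α}
    (hv : v ∉ X) (hX : (H.induce (↑(insert v X) : Set α)).IsCompleteMultipartite) :
    (d ^ #{u ∈ X | H.Adj v u} - #{u ∈ X | H.Adj v u} * ρ) * homDensityOn H G X ≤
      homDensityOn H G (insert v X) := by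
  classical
  set B : Finset α := {u ∈ X | H.Adj v u} with hB
  set P : Finset α := {u ∈ X | ¬H.Adj v u} with hP
  have indep := isIndepSet_insert_filter_not_adj hX
  have complete := isCompleteBetween_filter_adj hX
  have P_subset : P ⊆ insert v P := subset_insert v P
  have hvP : v ∉ P := fun h ↦ hv (mem_filter.1 h).1
  have nbr_bound := mul_expect_mul_pow_le (homInd_nonneg B) (commonNbrDensity_nonneg B)
    (hG.le_expect_homInd_mul_commonNbrDensity hρ hd hd1
      (isCompleteMultipartite_induce_mono ((filter_subset _ X).trans (subset_insert v X)) hX)) #P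
  rw [← card_insert_of_notMem hvP, ← homDensityOn_union indep complete,
    ← homDensityOn_union (indep.mono (coe_subset.2 P_subset)) fun b hb u hu ↦
      complete hb (P_subset hu)] at nbr_bound
  rwa [hB, hP, filter_adj_union_insert_filter_not_adj, filter_union_filter_not_eq] at nbr_bound

end MultipartiteCount

section TreeInduction

variable {ι : Type*} [Fintype ι] [DecidableEq ι] {T : SimpleGraph ι}

theorem connected_induction (hT : T.Connected) {motive : Finset ι → Prop}
    (singleton : ∀ X, motive {X})
    (insert : ∀ (U : Finset ι) (X Y : ι), (T.induce (U : Set ι)).Connected → X ∈ U → Y ∉ U →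
      T.Adj X Y → motive U → motive (insert Y U)) :
    motive univ := by
  obtain ⟨X₀⟩ := hT.nonempty
  have nonempty : {U : Finset ι | (T.induce (U : Set ι)).Connected ∧ motive U}.Nonempty :=
    ⟨{X₀}, by rw [coe_singleton]; exact .of_subsingleton, singleton X₀⟩
  obtain ⟨U, ⟨hU, motive_U⟩, maximal⟩ := (Set.toFinite _).exists_maximal nonempty
  suffices U = univ from this ▸ motive_U
  by_contra! ne_univ
  obtain ⟨b, -, hb⟩ := exists_of_ssubset (ssubset_univ_iff.2 ne_univ)
  obtain ⟨a, ha⟩ := hU.nonempty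
  obtain ⟨p⟩ := hT.preconnected a b
  obtain ⟨⟨⟨X, Y⟩, adj⟩, -, hX, hY⟩ := p.exists_boundary_dart U ha hb
  have insert_connected : (T.induce (↑(Insert.insert Y U) : Set ι)).Connected := by
    rw [coe_insert, Set.insert_eq, Set.union_comm]
    exact SimpleGraph.connected_induce_union hU.preconnected .of_subsingleton hX rfl adj
  exact hY (maximal ⟨insert_connected, insert U X Y hU hX hY adj motive_U⟩ (subset_insert Y U)
    (mem_insert_self Y U))

variable {α : Type*} [DecidableEq α] {H : SimpleGraph α} {bag : ι → Finset α}

omit [Fintype ι] [DecidableEq ι] in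
theorem IsTreeDecomp.inter_subset_of_connected (hD : IsTreeDecomp H bag T) {U : Set ι}
    (hU : (T.induce U).Connected) {X Y Z : ι} (hX : X ∈ U) (hY : Y ∉ U) (adj : T.Adj X Y)
    (hZ : Z ∈ U) : bag Z ∩ bag Y ⊆ bag X := by
  obtain ⟨p, hp⟩ := hU.exists_isPath ⟨Z, hZ⟩ ⟨X, hX⟩
  let q : T.Walk Z X := p.map (SimpleGraph.Embedding.induce U).toHom
  have hY_notMem : Y ∉ (p.map (SimpleGraph.Embedding.induce U).toHom).support := by
    rw [SimpleGraph.Walk.support_map, List.mem_map]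
    rintro ⟨W, -, rfl⟩
    exact hY W.2
  refine hD.2.2.2 Z Y X (q.concat adj)
    ((hp.map Subtype.val_injective).concat hY_notMem adj) ?_
  simp [SimpleGraph.Walk.support_concat]

theorem IsTreeDecomp.induction (hD : IsTreeDecomp H bag T) {motive : Finset ι → Prop}
    (singleton : ∀ X, motive {X})
    (insert : ∀ (U : Finset ι) (X Y : ι), X ∈ U → T.Adj X Y →
      U.biUnion bag ∩ bag Y = bag X ∩ bag Y → motive U → motive (insert Y U)) :
    motive univ := by
  refine connected_induction hD.1.connected singleton fun U X Y hU hX hY adj ↦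
    insert U X Y hX adj ?_
  refine Subset.antisymm (subset_inter ?_ inter_subset_right)
    (inter_subset_inter_right (subset_biUnion_of_mem bag hX))
  rw [biUnion_inter, biUnion_subset]
  exact fun Z hZ ↦ hD.inter_subset_of_connected hU hX hY adj hZ

end TreeInduction

section IsoTransfer

variable {α β : Type*} [DecidableEq α] {H : SimpleGraph α} {G : SimpleGraph β} {X Y : Finset α}

theorem exists_perm_homInd_eq [Finite α] (e : H.induce (X : Set α) ≃g H.induce (Y : Set α))
    (he : ∀ (v : α) (hX : v ∈ X), v ∈ Y → (e ⟨v, hX⟩ : α) = v) :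
    ∃ π : Equiv.Perm α, (∀ v ∈ X ∩ Y, π v = v) ∧
      ∀ φ : α → β, homInd H G Y φ = homInd H G X (φ ∘ π) := by
  set π : Equiv.Perm α := e.toEquiv.extendSubtype
  have π_apply (x : α) (hx : x ∈ X) : π x = (e ⟨x, hx⟩ : α) :=
    e.toEquiv.extendSubtype_apply_of_mem x hx
  have π_adj (x y : α) (hx : x ∈ X) (hy : y ∈ X) : H.Adj (π x) (π y) ↔ H.Adj x y := by
    rw [π_apply x hx, π_apply y hy]
    exact e.map_adj_iff (v := ⟨x, hx⟩) (w := ⟨y, hy⟩)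
  have mem_iff (x : α) : π x ∈ Y ↔ x ∈ X :=
    ⟨not_imp_not.1 (e.toEquiv.extendSubtype_not_mem x), e.toEquiv.extendSubtype_mem x⟩
  have isHomOn_iff (φ : α → β) : IsHomOn H G Y φ ↔ IsHomOn H G X (φ ∘ π) := by
    refine π.surjective.forall.trans (forall_congr' fun x ↦ imp_congr_ctx (mem_iff x) fun hx ↦ ?_)
    refine π.surjective.forall.trans (forall_congr' fun y ↦ imp_congr_ctx (mem_iff y) fun hy ↦ ?_)
    exact imp_congr_left (π_adj x y hx hy)
  refine ⟨π, fun v hv ↦ ?_, fun φ ↦ by rw [homInd, homInd, propext (isHomOn_iff φ)]⟩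
  obtain ⟨hvX, hvY⟩ := mem_inter.1 hv
  rw [π_apply v hvX, he v hvX hvY]

variable [Fintype α] [Fintype β]

theorem condExpect_homInd_eq (e : H.induce (X : Set α) ≃g H.induce (Y : Set α))
    (he : ∀ (v : α) (hX : v ∈ X), v ∈ Y → (e ⟨v, hX⟩ : α) = v) :
    condExpect (X ∩ Y) (homInd H G X) = condExpect (X ∩ Y) (homInd H G Y) := by
  obtain ⟨π, π_fix, homInd_eq⟩ := exists_perm_homInd_eq (G := G) e he
  rw [funext homInd_eq, condExpect_comp_perm π_fix]

theorem condExpect_uniformHom_eq (e : H.induce (X : Set α) ≃g H.induce (Y : Set α))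
    (he : ∀ (v : α) (hX : v ∈ X), v ∈ Y → (e ⟨v, hX⟩ : α) = v) :
    condExpect (X ∩ Y) (uniformHom H G X) = condExpect (X ∩ Y) (uniformHom H G Y) := by
  have homInd_eq := condExpect_homInd_eq (G := G) e he
  have homDensityOn_eq : homDensityOn H G X = homDensityOn H G Y := by
    rw [homDensityOn, ← expect_condExpect (X ∩ Y), homInd_eq, expect_condExpect, homDensityOn]
  ext φ
  simpa only [condExpect, uniformHom, ← expect_div, homDensityOn_eq] using
    congrArg (· / homDensityOn H G Y) (congrFun homInd_eq φ)

end IsoTransfer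

section BagCoupling

variable {α β ι γ : Type*} [Fintype α] [DecidableEq α] [Fintype β] {H : SimpleGraph α}
  {G : SimpleGraph β} {J : SimpleGraph γ} {S X : Finset α}

theorem exp_entropy_le_homDensityOn {w : (α → β) → ℝ} (hw : ∀ φ, 0 ≤ w φ)
    (hw1 : 𝔼 φ, w φ = 1) (hom : ∀ φ, w φ ≠ 0 → IsHomOn H G X φ) :
    Real.exp (entropy w) ≤ homDensityOn H G X :=
  exp_entropy_le_expect hw (homInd_nonneg X) hw1 fun φ hφ ↦ homInd_of_isHomOn (hom φ hφ)

theorem isHomOn_of_condExpect_uniformHom_ne_zero (hS : S ⊆ X) {φ : α → β}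
    (h : condExpect S (uniformHom H G X) φ ≠ 0) : IsHomOn H G S φ := by
  have uniformHom_eq : homInd H G S * uniformHom H G X = uniformHom H G X := by
    ext φ
    by_cases hφ : uniformHom H G X φ = 0
    · simp [hφ]
    · simp [homInd_of_isHomOn ((isHomOn_of_uniformHom_ne_zero hφ).mono hS)]
  rw [← uniformHom_eq, condExpect_mul_of_dependsOn (dependsOn_homInd S)] at h
  exact homInd_ne_zero.1 (left_ne_zero_of_mul h)

theorem entropy_condExpect_uniformHom_le (hS : S ⊆ X) (hX : homDensityOn H G X ≠ 0) :
    entropy (condExpect S (uniformHom H G X)) ≤ Real.log (homDensityOn H G S) := by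
  have S_pos : 0 < homDensityOn H G S :=
    ((homDensityOn_nonneg X).lt_of_ne' hX).trans_le (homDensityOn_le_homDensityOn hS)
  rw [Real.le_log_iff_exp_le S_pos]
  exact exp_entropy_le_homDensityOn (condExpect_nonneg (uniformHom_nonneg X))
    (by rw [expect_condExpect, expect_uniformHom hX])
    fun _ ↦ isHomOn_of_condExpect_uniformHom_ne_zero hS

/-- `w` is a density in the coordinates covered by the bags with index in `U`, whose marginal on
each of these bags is the uniform distribution on homomorphisms. -/
structure IsBagCoupling (H : SimpleGraph α) (G : SimpleGraph β) (bag : ι → Finset α) (U : Finset ι)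
    (w : (α → β) → ℝ) : Prop where
  nonneg : ∀ φ, 0 ≤ w φ
  dependsOn : DependsOn w ↑(U.biUnion bag)
  condExpect_bag : ∀ X ∈ U, condExpect (bag X) w = uniformHom H G (bag X)

variable {bag : ι → Finset α} {U : Finset ι} {w : (α → β) → ℝ} {X Y : ι}

theorem isBagCoupling_singleton (X : ι) : IsBagCoupling H G bag {X} (uniformHom H G (bag X)) where
  nonneg := uniformHom_nonneg _
  dependsOn := by simpa only [singleton_biUnion] using dependsOn_uniformHom (bag X)
  condExpect_bag := by
    simp only [mem_singleton, forall_eq]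
    exact condExpect_of_dependsOn (dependsOn_uniformHom _)

namespace IsBagCoupling

theorem isHomOn (hw : IsBagCoupling H G bag U w) (hX : X ∈ U) {φ : α → β} (hφ : w φ ≠ 0) :
    IsHomOn H G (bag X) φ := by
  refine isHomOn_of_uniformHom_ne_zero fun h ↦ hφ ?_
  rw [← hw.condExpect_bag X hX] at h
  exact eq_zero_of_condExpect_eq_zero hw.nonneg h

theorem expect_eq_one (hw : IsBagCoupling H G bag U w) (hX : X ∈ U)
    (hpos : homDensityOn H G (bag X) ≠ 0) : 𝔼 φ, w φ = 1 := by
  rw [← expect_condExpect (bag X), hw.condExpect_bag X hX, expect_uniformHom hpos]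

variable (hw : IsBagCoupling H G bag U w) (hX : X ∈ U)
  (hY : U.biUnion bag ∩ bag Y = bag X ∩ bag Y)
  (h : condExpect (bag X ∩ bag Y) (uniformHom H G (bag X)) =
    condExpect (bag X ∩ bag Y) (uniformHom H G (bag Y)))
include hw hX hY h

theorem condExpect_inter_eq :
    condExpect (U.biUnion bag ∩ bag Y) w =
      condExpect (U.biUnion bag ∩ bag Y) (uniformHom H G (bag Y)) := by
  rw [hY, ← condExpect_condExpect inter_subset_left w, hw.condExpect_bag X hX, h]

theorem glue [DecidableEq ι] :
    IsBagCoupling H G bag (insert Y U)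
      (glue (U.biUnion bag) (bag Y) w (uniformHom H G (bag Y))) where
  nonneg := glue_nonneg hw.nonneg (uniformHom_nonneg _)
  dependsOn := by
    rw [biUnion_insert, union_comm]
    exact dependsOn_glue hw.dependsOn (dependsOn_uniformHom _)
  condExpect_bag Z hZ := by
    have marginal_eq := hw.condExpect_inter_eq hX hY h
    rcases mem_insert.1 hZ with rfl | hZ
    · rw [glue_comm marginal_eq]
      rw [inter_comm] at marginal_eq
      exact condExpect_glue (uniformHom_nonneg _) (dependsOn_uniformHom _) hw.dependsOn
        marginal_eq.symm
    · rw [← condExpect_condExpect (subset_biUnion_of_mem bag hZ), condExpect_glue hw.nonneg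
        hw.dependsOn (dependsOn_uniformHom _) marginal_eq, hw.condExpect_bag Z hZ]

theorem le_entropy_glue (hpos : homDensityOn H G (bag Y) ≠ 0) :
    entropy w + Real.log (homDensityOn H G (bag Y)) -
        Real.log (homDensityOn H G (bag X ∩ bag Y)) ≤
      entropy (_root_.glue (U.biUnion bag) (bag Y) w (uniformHom H G (bag Y))) := by
  have marginal_eq := hw.condExpect_inter_eq hX hY h
  rw [entropy_glue hw.nonneg (uniformHom_nonneg _) hw.dependsOn (dependsOn_uniformHom _)
    marginal_eq, entropy_uniformHom, marginal_eq, hY]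
  gcongr
  exact entropy_condExpect_uniformHom_le inter_subset_right hpos

end IsBagCoupling

variable [Fintype ι] {T : SimpleGraph ι}

theorem IsTreeDecomp.biUnion_bag (hD : IsTreeDecomp H bag T) : univ.biUnion bag = univ := by
  refine eq_univ_of_forall fun v ↦ ?_
  obtain ⟨X, hX⟩ := hD.2.1 v
  exact mem_biUnion.2 ⟨X, mem_univ X, hX⟩

theorem IsTreeDecomp.exp_entropy_le_homDensity (hD : IsTreeDecomp H bag T)
    (hw : IsBagCoupling H G bag univ w) (hpos : ∀ X, homDensityOn H G (bag X) ≠ 0) :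
    Real.exp (entropy w) ≤ homDensity H G := by
  obtain ⟨X⟩ := hD.1.connected.nonempty
  rw [← homDensityOn_univ]
  refine exp_entropy_le_homDensityOn hw.nonneg (hw.expect_eq_one (mem_univ X) (hpos X))
    fun φ hφ u _ v _ huv ↦ ?_
  obtain ⟨Z, hu, hv⟩ := hD.2.2.1 u v huv
  exact hw.isHomOn (mem_univ Z) hφ u hu v hv huv

theorem IsJDecomp.exists_isBagCoupling (hD : IsJDecomp H J bag T) {F : Finset α → ℝ}
    (hF : ∀ S, 0 < F S) (hF_mul : ∀ S X, F (S ∪ X) * F (S ∩ X) ≤ F S * F X)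
    (hbag : ∀ X, F (bag X) ≤ homDensityOn H G (bag X))
    (hsub : ∀ X, ∀ S ⊆ bag X,
      F (bag X) * homDensityOn H G S ≤ F S * homDensityOn H G (bag X)) :
    ∃ w, IsBagCoupling H G bag univ w ∧ Real.log (F univ) ≤ entropy w := by
  classical
  rw [← hD.1.biUnion_bag]
  have bag_pos (X : ι) : 0 < homDensityOn H G (bag X) := (hF _).trans_le (hbag X)
  refine hD.1.induction
    (motive := fun U ↦ ∃ w, IsBagCoupling H G bag U w ∧ Real.log (F (U.biUnion bag)) ≤ entropy w)
    (fun X ↦ ⟨_, isBagCoupling_singleton X, ?_⟩) ?_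
  · rw [singleton_biUnion, entropy_uniformHom]
    exact Real.log_le_log (hF _) (hbag X)
  rintro U X Y hX adj hY ⟨w, hw, entropy_w⟩
  obtain ⟨e, he⟩ := hD.2.2 X Y adj
  have marginal_eq := condExpect_uniformHom_eq (G := G) e he
  refine ⟨_, hw.glue hX hY marginal_eq, le_trans ?_
    (hw.le_entropy_glue hX hY marginal_eq (bag_pos Y).ne')⟩
  have S_pos : 0 < homDensityOn H G (bag X ∩ bag Y) :=
    (bag_pos Y).trans_le (homDensityOn_le_homDensityOn inter_subset_right)
  have union_bound := Real.log_le_log (mul_pos (hF _) (hF _)) (hF_mul (U.biUnion bag) (bag Y))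
  have bag_bound := Real.log_le_log (mul_pos (hF _) S_pos)
    (hsub Y (bag X ∩ bag Y) inter_subset_right)
  rw [Real.log_mul (hF _).ne' (hF _).ne', Real.log_mul (hF _).ne' (hF _).ne', hY] at union_bound
  rw [Real.log_mul (hF _).ne' S_pos.ne', Real.log_mul (hF _).ne' (bag_pos Y).ne'] at bag_bound
  rw [biUnion_insert, union_comm]
  linarith

omit [Fintype ι] in
theorem IsJDecomp.le_homDensity [Finite ι] [Nonempty β] (hD : IsJDecomp H J bag T)
    {F : Finset α → ℝ} (hF : ∀ S, 0 < F S) (hF_empty : F ∅ = 1)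
    (hF_mul : ∀ S X, F (S ∪ X) * F (S ∩ X) ≤ F S * F X)
    (hsub : ∀ X, ∀ S ⊆ bag X,
      F (bag X) * homDensityOn H G S ≤ F S * homDensityOn H G (bag X)) :
    F univ ≤ homDensity H G := by
  have := Fintype.ofFinite ι
  have hbag (X : ι) : F (bag X) ≤ homDensityOn H G (bag X) := by
    simpa only [homDensityOn_empty, hF_empty, mul_one, one_mul] using hsub X ∅ (empty_subset _)
  have bag_pos (X : ι) : 0 < homDensityOn H G (bag X) := (hF _).trans_le (hbag X)
  obtain ⟨w, hw, le_entropy⟩ := hD.exists_isBagCoupling hF hF_mul hbag hsub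
  calc F univ ≤ Real.exp (entropy w) := (Real.log_le_iff_le_exp (hF _)).1 le_entropy
    _ ≤ homDensity H G := hD.1.exp_entropy_le_homDensity hw fun X ↦ (bag_pos X).ne'

end BagCoupling

section CompleteMultipartiteBound

variable {α β γ : Type*} [Fintype α] [Fintype β] [Nonempty β] {H : SimpleGraph α}
  {G : SimpleGraph β} {J : SimpleGraph γ} {ρ d ε : ℝ}

variable (H d ε) in
/-- The bound on the density of the subgraph of `H` induced on `X` that is obtained by adding the
vertices of `X` one at a time, losing a factor `1 - ε` for each. -/
noncomputable def densityBound (X : Finset α) : ℝ :=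
  (1 - ε) ^ #X * d ^ #(edgesOn H X)

omit [Fintype α] in
theorem densityBound_pos (hd : 0 < d) (hε : ε < 1) (X : Finset α) : 0 < densityBound H d ε X :=
  mul_pos (pow_pos (sub_pos.2 hε) _) (pow_pos hd _)

variable [DecidableEq α]

omit [Fintype α] in
theorem densityBound_union_mul_densityBound_inter_le (hd : 0 ≤ d) (hd1 : d ≤ 1) (hε : ε ≤ 1)
    (S X : Finset α) :
    densityBound H d ε (S ∪ X) * densityBound H d ε (S ∩ X) ≤
      densityBound H d ε S * densityBound H d ε X := by
  simp only [densityBound, mul_mul_mul_comm, ← pow_add, card_union_add_card_inter]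
  exact mul_le_mul_of_nonneg_left
    (pow_le_pow_of_le_one hd hd1 (card_edgesOn_add_card_edgesOn_le S X))
    (pow_nonneg (sub_nonneg.2 hε) _)

omit [Fintype α] in
theorem densityBound_insert [DecidableRel H.Adj] {X : Finset α} {v : α} (hv : v ∉ X) :
    densityBound H d ε (insert v X) =
      (1 - ε) * d ^ #{u ∈ X | H.Adj v u} * densityBound H d ε X := by
  rw [densityBound, densityBound, card_insert_of_notMem hv, card_edgesOn_insert hv]
  ring

theorem LocallyDense.one_sub_mul_pow_mul_homDensityOn_le [DecidableRel H.Adj]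
    (hG : LocallyDense G ρ d) (hρ : 0 ≤ ρ) (hd : 0 < d) (hd1 : d ≤ 1) (hε : 0 ≤ ε)
    (hρε : Fintype.card α * ρ ≤ ε * d ^ edgeCount H) {X : Finset α} {v : α} (hv : v ∉ X)
    (hX : (H.induce (↑(insert v X) : Set α)).IsCompleteMultipartite) :
    (1 - ε) * d ^ #{u ∈ X | H.Adj v u} * homDensityOn H G X ≤ homDensityOn H G (insert v X) := by
  set k := #{u ∈ X | H.Adj v u}
  have k_le_edgeCount : k ≤ edgeCount H := by
    rw [← card_edgesOn_univ]
    exact (Nat.le_add_right _ _).trans_eq (card_edgesOn_insert hv).symm |>.trans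
      (card_le_card (edgesOn_mono (subset_univ _)))
  have error_bound : k * ρ ≤ ε * d ^ k :=
    calc k * ρ ≤ Fintype.card α * ρ := by
          gcongr
          exact card_le_univ _
      _ ≤ ε * d ^ edgeCount H := hρε
      _ ≤ ε * d ^ k :=
          mul_le_mul_of_nonneg_left (pow_le_pow_of_le_one hd.le hd1 k_le_edgeCount) hε
  calc (1 - ε) * d ^ k * homDensityOn H G X
      ≤ (d ^ k - k * ρ) * homDensityOn H G X :=
        mul_le_mul_of_nonneg_right (by linarith) (homDensityOn_nonneg X)
    _ ≤ homDensityOn H G (insert v X) :=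
        hG.mul_homDensityOn_le_homDensityOn_insert hρ hd.le hd1 hv hX

theorem LocallyDense.densityBound_mul_homDensityOn_le (hG : LocallyDense G ρ d) (hρ : 0 ≤ ρ)
    (hd : 0 < d) (hd1 : d ≤ 1) (hε : 0 ≤ ε) (hε1 : ε < 1)
    (hρε : Fintype.card α * ρ ≤ ε * d ^ edgeCount H) {S X : Finset α} (hS : S ⊆ X)
    (hX : (H.induce (X : Set α)).IsCompleteMultipartite) :
    densityBound H d ε X * homDensityOn H G S ≤ densityBound H d ε S * homDensityOn H G X := by
  classical
  obtain ⟨D, rfl⟩ : ∃ D, X = D ∪ S := ⟨X, (union_eq_left.2 hS).symm⟩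
  clear hS
  induction D using Finset.induction_on with
  | empty => simp
  | insert v D _ ih =>
    rw [insert_union] at hX ⊢
    have ih := ih (isCompleteMultipartite_induce_mono (subset_insert v _) hX)
    by_cases hv : v ∈ D ∪ S
    · rwa [insert_eq_self.2 hv]
    have step_nonneg : 0 ≤ (1 - ε) * d ^ #{u ∈ D ∪ S | H.Adj v u} :=
      mul_nonneg (sub_nonneg.2 hε1.le) (pow_nonneg hd.le _)
    calc densityBound H d ε (insert v (D ∪ S)) * homDensityOn H G S
        = (1 - ε) * d ^ #{u ∈ D ∪ S | H.Adj v u} *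
            (densityBound H d ε (D ∪ S) * homDensityOn H G S) := by
          rw [densityBound_insert hv, mul_assoc]
      _ ≤ (1 - ε) * d ^ #{u ∈ D ∪ S | H.Adj v u} *
            (densityBound H d ε S * homDensityOn H G (D ∪ S)) :=
          mul_le_mul_of_nonneg_left ih step_nonneg
      _ = densityBound H d ε S *
            ((1 - ε) * d ^ #{u ∈ D ∪ S | H.Adj v u} * homDensityOn H G (D ∪ S)) :=
          mul_left_comm ..
      _ ≤ densityBound H d ε S * homDensityOn H G (insert v (D ∪ S)) :=
          mul_le_mul_of_nonneg_left
            (hG.one_sub_mul_pow_mul_homDensityOn_le hρ hd hd1 hε hρε hv hX)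
            (densityBound_pos hd hε1 S).le

theorem LocallyDense.one_sub_pow_mul_pow_le_homDensity (hG : LocallyDense G ρ d) (hρ : 0 ≤ ρ)
    (hd : 0 < d) (hd1 : d ≤ 1) (hε : 0 ≤ ε) (hε1 : ε < 1)
    (hρε : Fintype.card α * ρ ≤ ε * d ^ edgeCount H) (hJ : J.IsCompleteMultipartite)
    (hH : JDecomposable H J) :
    (1 - ε) ^ Fintype.card α * d ^ edgeCount H ≤ homDensity H G := by
  obtain ⟨ι, _, bag, T, hD⟩ := hH
  have bag_multipartite (X : ι) : (H.induce (bag X : Set α)).IsCompleteMultipartite :=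
    hJ.comap (hD.2.1 X).some.toEmbedding
  rw [← card_edgesOn_univ, ← card_univ]
  exact hD.le_homDensity (F := densityBound H d ε) (densityBound_pos hd hε1)
    (by simp [densityBound, edgesOn])
    (densityBound_union_mul_densityBound_inter_le hd.le hd1 hε1.le)
    fun X S hS ↦ hG.densityBound_mul_homDensityOn_le hρ hd hd1 hε hε1 hρε hS (bag_multipartite X)

end CompleteMultipartiteBound

theorem homDensity_nonneg {α β : Type*} [Fintype α] [Fintype β] (H : SimpleGraph α)
    (G : SimpleGraph β) : 0 ≤ homDensity H G := by
  unfold homDensity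
  positivity

theorem stmt1_general {α γ : Type*} [Fintype α] [DecidableEq α] {H : SimpleGraph α}
    {J : SimpleGraph γ} (hJ : J.IsCompleteMultipartite) (hH : JDecomposable H J) {η : ℝ}
    (hη : 0 < η) :
    ∃ ρ : ℝ, 0 < ρ ∧ ∀ d : ℝ, 0 < d → d ≤ 1 →
      ∀ (β : Type*) [Fintype β] [Nonempty β] (G : SimpleGraph β),
        LocallyDense G ρ d → d ^ edgeCount H - η ≤ homDensity H G := by
  set ε : ℝ := η / (Fintype.card α + 1) with hε
  have ε_pos : 0 < ε := by positivity
  have card_mul_ε : Fintype.card α * ε ≤ η := by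
    rw [hε, mul_div_left_comm]
    exact mul_le_of_le_one_right hη.le (div_le_one_of_le₀ (by linarith) (by positivity))
  refine ⟨ε ^ 2, by positivity, fun d hd hd1 β _ _ G hG ↦ ?_⟩
  rcases le_or_gt (d ^ edgeCount H) η with small | large
  · exact (sub_nonpos.2 small).trans (homDensity_nonneg H G)
  have pow_le_one : d ^ edgeCount H ≤ 1 := pow_le_one₀ hd.le hd1
  have ε_lt_one : ε < 1 :=
    (div_le_self hη.le (le_add_of_nonneg_left (Nat.cast_nonneg _))).trans_lt
      (large.trans_le pow_le_one)
  have error_bound : Fintype.card α * ε ^ 2 ≤ ε * d ^ edgeCount H := by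
    rw [sq, ← mul_assoc, mul_comm]
    exact mul_le_mul_of_nonneg_left (card_mul_ε.trans large.le) ε_pos.le
  have bernoulli : 1 - Fintype.card α * ε ≤ (1 - ε) ^ Fintype.card α := by
    simpa only [mul_neg, ← sub_eq_add_neg] using
      one_add_mul_le_pow (a := -ε) (by linarith) (Fintype.card α)
  calc d ^ edgeCount H - η ≤ d ^ edgeCount H - η * d ^ edgeCount H :=
        sub_le_sub_left (mul_le_of_le_one_right hη.le pow_le_one) _
    _ = (1 - η) * d ^ edgeCount H := by ring
    _ ≤ (1 - ε) ^ Fintype.card α * d ^ edgeCount H := by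
        gcongr
        exact (sub_le_sub_left card_mul_ε 1).trans bernoulli
    _ ≤ homDensity H G :=
        hG.one_sub_pow_mul_pow_le_homDensity (sq_nonneg ε) hd hd1 ε_pos.le ε_lt_one error_bound
          hJ hH

end

theorem stmt1 {α : Type*} [Fintype α] [DecidableEq α] (ℓ : ℕ) (r : Fin ℓ → ℕ)
    (H : SimpleGraph α)
    (hH : JDecomposable H (SimpleGraph.completeMultipartiteGraph (fun i : Fin ℓ => Fin (r i))))
    (η : ℝ) (hη : 0 < η) :
    ∃ (ρ : ℝ) (n₀ : ℕ), 0 < ρ ∧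
      ∀ (d : ℝ), 0 < d → d ≤ 1 →
        ∀ (β : Type) [Fintype β] (G : SimpleGraph β),
          n₀ ≤ Fintype.card β → LocallyDense G ρ d →
            homDensity H G ≥ d ^ edgeCount H - η := by
  obtain ⟨ρ, hρ, bound⟩ :=
    stmt1_general (SimpleGraph.completeMultipartiteGraph.isCompleteMultipartite _) hH hη
  exact ⟨ρ, 1, hρ, fun d hd hd1 β _ G hβ hG ↦
    have := Fintype.card_pos_iff.1 hβ
    bound d hd hd1 β G hG⟩
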